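/- arXiv:2511.10344 — 8 statements merged into one kernel-verified Lean document; each statement's English description precedes it below -/
import Mathlib

section
/- For every gap-estimate sequence (Δ^m_k, r^m_k) for mean rewards μ with gaps Δ_k, and for every epoch index m ≥ 0 and every arm k: (6/7)·Δ_k − (3/4)·2^{−m} ≤ Δ^m_k ≤ (8/7)·Δ_k + 2^{−m}. -/
/-- A gap-estimate sequence for mean rewards `μ`: `D 0 k = 1`; for every epoch
`m+1`, the reward estimate `r (m+1) k` is within `D m k / 8` of `μ k`, and
`D (m+1) k = max (2^{-(m+1)}) (r_*^{m+1} - r (m+1) k)` where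
`r_*^{m+1} = max_k (r (m+1) k - D m k / 8)`. -/
structure GapEstSeq {K : Type*} [Fintype K] [Nonempty K] (μ : K → ℝ) where
  D : ℕ → K → ℝ
  r : ℕ → K → ℝ
  hD0 : ∀ k, D 0 k = 1
  hr : ∀ (m : ℕ) (k : K), |r (m + 1) k - μ k| ≤ D m k / 8
  hD : ∀ (m : ℕ) (k : K),
    D (m + 1) k = max ((2 : ℝ) ^ (-((m : ℤ) + 1)))
      ((Finset.univ.sup' Finset.univ_nonempty (fun k' => r (m + 1) k' - D m k' / 8))
        - r (m + 1) k)

/-- Suboptimality-gap sandwich for gap-estimate sequences: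
`(6/7)Δ_k − (3/4)2^{−m} ≤ Δ^m_k ≤ (8/7)Δ_k + 2^{−m}`. -/
theorem stmt_3 {K : Type*} [Fintype K] [Nonempty K]
    (μ : K → ℝ) (hμ : ∀ k, μ k ∈ Set.Icc (0 : ℝ) 1)
    (kstar : K) (hks : ∀ k, μ k ≤ μ kstar)
    (S : GapEstSeq μ) (m : ℕ) (k : K) :
    (6 / 7) * (μ kstar - μ k) - (3 / 4) * (2 : ℝ) ^ (-(m : ℤ)) ≤ S.D m k ∧
    S.D m k ≤ (8 / 7) * (μ kstar - μ k) + (2 : ℝ) ^ (-(m : ℤ)) := by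
  have hU : ∀ (m : ℕ) (k : K), S.D m k ≤ (8 / 7) * (μ kstar - μ k) + (2 : ℝ) ^ (-(m : ℤ)) := by
    intro m
    induction m with
    | zero =>
      intro k
      have := hks k
      rw [S.hD0]
      norm_num
      linarith
    | succ n ih =>
      intro k
      have hp : (2 : ℝ) ^ (-(n : ℤ)) = 2 * (2 : ℝ) ^ (-((n : ℤ) + 1)) := by
        rw [← zpow_one_add₀ (by norm_num)]
        congr 1
        ring
      have hpos : (0 : ℝ) < (2 : ℝ) ^ (-((n : ℤ) + 1)) := by positivity
      have hs : Finset.univ.sup' Finset.univ_nonempty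
          (fun k' => S.r (n + 1) k' - S.D n k' / 8) ≤ μ kstar := by
        apply Finset.sup'_le
        intro b _
        have h1 := (abs_le.mp (S.hr n b)).2
        have h2 := hks b
        linarith
      have h1 := (abs_le.mp (S.hr n k)).1
      have h2 := hks k
      have h3 := ih k
      rw [S.hD]
      push_cast
      apply max_le <;> linarith
  refine ⟨?_, hU m k⟩
  cases m with
  | zero =>
    have h1 := (hμ k).1
    have h2 := (hμ kstar).2
    rw [S.hD0]
    norm_num
    linarith
  | succ n =>
    have hp : (2 : ℝ) ^ (-(n : ℤ)) = 2 * (2 : ℝ) ^ (-((n : ℤ) + 1)) := by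
      rw [← zpow_one_add₀ (by norm_num)]
      congr 1
      ring
    have hs : S.r (n + 1) kstar - S.D n kstar / 8 ≤ Finset.univ.sup' Finset.univ_nonempty
        (fun k' => S.r (n + 1) k' - S.D n k' / 8) :=
      Finset.le_sup' (fun k' => S.r (n + 1) k' - S.D n k' / 8) (Finset.mem_univ kstar)
    have h1 := (abs_le.mp (S.hr n k)).2
    have h2 := (abs_le.mp (S.hr n kstar)).1
    have h3 := hU n k
    have h4 := hU n kstar
    rw [S.hD]
    push_cast
    refine le_trans ?_ (le_max_right _ _)
    linarith
end

section
/- Fix a finite nonempty set of arms K with mean rewards μ_k ∈ [0,1] and gaps Δ_k, and suppose two agents i and j each have a gap-estimate sequence, (Δ^m_{i,k}, r^m_{i,k}) and (Δ^m_{j,k}, r^m_{j,k}) respectively, for the same μ. Then for every m ≥ 0 and every arm k: 1/4 ≤ Δ^m_{i,k} / Δ^m_{j,k} ≤ 4. -/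
theorem GapEstSeq.bounds {K : Type*} [Fintype K] [Nonempty K]
    (μ : K → ℝ) (kstar : K) (hks : ∀ k, μ k ≤ μ kstar) (S : GapEstSeq μ) (m : ℕ) :
    S.D m kstar = (2 : ℝ) ^ (-(m : ℤ)) ∧
    ∀ k, (2 : ℝ) ^ (-(m : ℤ)) ≤ S.D m k ∧
      S.D m k ≤ 8 / 7 * (μ kstar - μ k) + (2 : ℝ) ^ (-(m : ℤ)) ∧
      (m ≠ 0 → 6 / 7 * (μ kstar - μ k) - (2 : ℝ) ^ (-(m : ℤ)) ≤ S.D m k) := by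
  induction m with
  | zero =>
    refine ⟨by simp [S.hD0], fun k => ⟨by simp [S.hD0], ?_, by simp⟩⟩
    have := hks k
    simp only [S.hD0, Nat.cast_zero, neg_zero, zpow_zero]
    linarith
  | succ m ih =>
    obtain ⟨h1, h2⟩ := ih
    have hx : (2 : ℝ) ^ (-(m : ℤ)) = 2 * (2 : ℝ) ^ (-((m : ℤ) + 1)) := by
      rw [← zpow_one_add₀ (by norm_num : (2 : ℝ) ≠ 0)]
      congr 1
      ring
    have hpos : (0 : ℝ) < (2 : ℝ) ^ (-((m : ℤ) + 1)) := by positivity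
    push_cast
    rw [hx] at h1 h2
    have hD := S.hD m
    have hr := fun k => abs_le.1 (S.hr m k)
    set x := (2 : ℝ) ^ (-((m : ℤ) + 1))
    set R := Finset.univ.sup' Finset.univ_nonempty (fun k' => S.r (m + 1) k' - S.D m k' / 8)
    have hR1 : R ≤ μ kstar := by
      apply Finset.sup'_le
      intro k _
      have := hks k
      have := hr k
      linarith
    have hR2 : S.r (m + 1) kstar - S.D m kstar / 8 ≤ R :=
      Finset.le_sup' (fun k' => S.r (m + 1) k' - S.D m k' / 8) (Finset.mem_univ kstar)
    have hs := hr kstar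
    refine ⟨?_, fun k => ⟨?_, ?_, fun _ => ?_⟩⟩
    · rw [hD, max_eq_left]
      linarith
    · rw [hD]
      exact le_max_left _ _
    · have := hks k
      have := hr k
      have := h2 k
      rw [hD]
      apply max_le <;> linarith
    · have := hr k
      have := h2 k
      rw [hD]
      refine le_trans ?_ (le_max_right _ _)
      linarith

/-- Estimated-gap-ratio lemma: gap estimates of two agents for the same arm and
epoch have ratio in `[1/4, 4]`. -/
theorem stmt_5 {K : Type*} [Fintype K] [Nonempty K]
    (μ : K → ℝ) (hμ : ∀ k, μ k ∈ Set.Icc (0 : ℝ) 1)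
    (kstar : K) (hks : ∀ k, μ k ≤ μ kstar)
    (Si Sj : GapEstSeq μ) (m : ℕ) (k : K) :
    1 / 4 ≤ Si.D m k / Sj.D m k ∧ Si.D m k / Sj.D m k ≤ 4 := by
  have hi := (Si.bounds μ kstar hks m).2 k
  have hj := (Sj.bounds μ kstar hks m).2 k
  have hpos : (0 : ℝ) < (2 : ℝ) ^ (-(m : ℤ)) := by positivity
  have hjp : 0 < Sj.D m k := lt_of_lt_of_le hpos hj.1
  rw [div_le_iff₀ hjp, le_div_iff₀ hjp]
  rcases eq_or_ne m 0 with rfl | hm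
  · rw [Si.hD0, Sj.hD0]
    norm_num
  · obtain ⟨a1, a2, a3⟩ := hi
    obtain ⟨b1, b2, b3⟩ := hj
    have a4 := a3 hm
    have b4 := b3 hm
    constructor <;> linarith
end

section
/- Let G be a connected simple graph on a finite vertex set, w ≥ 0 an integer, and suppose every vertex i has a gap-estimate sequence (Δ^m_{i,k}, r^m_{i,k}) for the same mean rewards μ_k ∈ [0,1]. Fix λ > 0, α ∈ [0, 1/2), and m ≥ 1, and define ñ^m_{j,k} = min{ 16·λ·(Δ^{m−1}_{j,k})^{−2}, λ·4^{m−1} } / ((1−2α)·v_j^w) and n^m_{i,k} = λ·(Δ^{m−1}_{i,k})^{−2} / ((1−2α)·|N_w(i)|). Then for every vertex i, every j ∈ N_w(i), and every arm k: ñ^m_{j,k} ≥ n^m_{i,k}. -/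
open Classical in
/-- The `w`-neighborhood `N_w(i) = {j : d(i,j) ≤ w}` of a vertex. -/
noncomputable def Nw {V : Type*} [Fintype V] (G : SimpleGraph V) (w : ℕ) (i : V) :
    Finset V :=
  Finset.univ.filter (fun j => G.dist i j ≤ w)

lemma mem_Nw_self {V : Type*} [Fintype V] (G : SimpleGraph V) (w : ℕ) (i : V) :
    i ∈ Nw G w i := by
  simp [Nw, SimpleGraph.dist_self]

lemma Nw_nonempty {V : Type*} [Fintype V] (G : SimpleGraph V) (w : ℕ) (i : V) :
    (Nw G w i).Nonempty :=
  ⟨i, mem_Nw_self G w i⟩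

/-- `v_i^w = min_{j ∈ N_w(i)} |N_w(j)|`. -/
noncomputable def vw {V : Type*} [Fintype V] (G : SimpleGraph V) (w : ℕ) (i : V) : ℕ :=
  ((Nw G w i).image (fun j => (Nw G w j).card)).min'
    ((Nw_nonempty G w i).image _)

lemma GapEstSeq.upper {K : Type*} [Fintype K] [Nonempty K] {μ : K → ℝ} (S : GapEstSeq μ)
    (kstar : K) (hks : ∀ k, μ k ≤ μ kstar) (n : ℕ) (k : K) :
    S.D n k ≤ 8 / 7 * (μ kstar - μ k) + ((2 : ℝ) ^ n)⁻¹ := by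
  induction n generalizing k with
  | zero => rw [S.hD0]; have := hks k; norm_num; linarith
  | succ n ih =>
    have h1 := hks k
    have h2 := ih k
    have e : (2 : ℝ) ^ (-((n : ℤ) + 1)) = ((2 : ℝ) ^ (n + 1))⁻¹ := by
      rw [zpow_neg]; norm_cast
    have e2 : ((2 : ℝ) ^ n)⁻¹ = 2 * ((2 : ℝ) ^ (n + 1))⁻¹ := by
      rw [pow_succ]; field_simp
    have hp : 0 < ((2 : ℝ) ^ (n + 1))⁻¹ := by positivity
    rw [S.hD, e]
    apply max_le
    · linarith
    · have h3 : Finset.univ.sup' Finset.univ_nonempty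
          (fun k' => S.r (n + 1) k' - S.D n k' / 8) ≤ μ kstar := by
        apply Finset.sup'_le
        intro b _
        have := (abs_le.1 (S.hr n b)).2
        have := hks b
        linarith
      have h4 := (abs_le.1 (S.hr n k)).1
      linarith

lemma GapEstSeq.lower {K : Type*} [Fintype K] [Nonempty K] {μ : K → ℝ} (S : GapEstSeq μ)
    (kstar : K) (hks : ∀ k, μ k ≤ μ kstar) (hμ : ∀ k, μ k ∈ Set.Icc (0 : ℝ) 1)
    (n : ℕ) (k : K) :
    ((2 : ℝ) ^ n)⁻¹ ≤ S.D n k ∧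
      6 / 7 * (μ kstar - μ k) - 3 / 4 * ((2 : ℝ) ^ n)⁻¹ ≤ S.D n k := by
  cases n with
  | zero =>
    rw [S.hD0]
    have h1 := (hμ k).1
    have h2 := (hμ kstar).2
    norm_num
    linarith
  | succ n =>
    have e : (2 : ℝ) ^ (-((n : ℤ) + 1)) = ((2 : ℝ) ^ (n + 1))⁻¹ := by
      rw [zpow_neg]; norm_cast
    have e2 : ((2 : ℝ) ^ n)⁻¹ = 2 * ((2 : ℝ) ^ (n + 1))⁻¹ := by
      rw [pow_succ]; field_simp
    rw [S.hD, e]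
    refine ⟨le_max_left _ _, le_trans ?_ (le_max_right _ _)⟩
    have h3 := Finset.le_sup' (fun k' => S.r (n + 1) k' - S.D n k' / 8)
      (Finset.mem_univ kstar)
    have h4 := (abs_le.1 (S.hr n k)).2
    have h5 := (abs_le.1 (S.hr n kstar)).1
    have h6 := S.upper kstar hks n k
    have h7 := S.upper kstar hks n kstar
    linarith

/-- Pull-count domination over the network: each neighbor `j ∈ N_w(i)`'s planned
pull count `ñ^m_{j,k}` dominates agent `i`'s per-neighbor quota `n^m_{i,k}`. -/
theorem stmt_7 {V : Type*} [Fintype V] (G : SimpleGraph V) (hG : G.Connected) (w : ℕ)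
    {K : Type*} [Fintype K] [Nonempty K]
    (μ : K → ℝ) (hμ : ∀ k, μ k ∈ Set.Icc (0 : ℝ) 1)
    (kstar : K) (hks : ∀ k, μ k ≤ μ kstar)
    (S : V → GapEstSeq μ)
    (lam α : ℝ) (hlam : 0 < lam) (hα0 : 0 ≤ α) (hα : α < 1 / 2)
    (m : ℕ) (hm : 1 ≤ m)
    (i j : V) (hj : j ∈ Nw G w i) (k : K) :
    lam * (((S i).D (m - 1) k) ^ 2)⁻¹ / ((1 - 2 * α) * ((Nw G w i).card : ℝ)) ≤
      min (16 * lam * (((S j).D (m - 1) k) ^ 2)⁻¹) (lam * 4 ^ (m - 1)) /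
        ((1 - 2 * α) * ((vw G w j : ℕ) : ℝ)) := by
  have hvle : vw G w j ≤ (Nw G w i).card := by
    apply Finset.min'_le
    refine Finset.mem_image_of_mem (fun j => (Nw G w j).card) ?_
    simp only [Nw, Finset.mem_filter, Finset.mem_univ, true_and] at hj ⊢
    rwa [SimpleGraph.dist_comm]
  have hvpos : 0 < vw G w j := by
    have h := Finset.min'_mem ((Nw G w j).image (fun j => (Nw G w j).card))
      ((Nw_nonempty G w j).image _)
    obtain ⟨a, _, ha⟩ := Finset.mem_image.1 h
    have h2 : (Nw G w a).card = vw G w j := ha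
    rw [← h2]
    exact Finset.card_pos.2 (Nw_nonempty G w a)
  have hvpos' : (0 : ℝ) < (vw G w j : ℝ) := by exact_mod_cast hvpos
  have hvle' : (vw G w j : ℝ) ≤ ((Nw G w i).card : ℝ) := by exact_mod_cast hvle
  have hα' : 0 < 1 - 2 * α := by linarith
  obtain ⟨hi1, hi2⟩ := (S i).lower kstar hks hμ (m - 1) k
  obtain ⟨hj1, -⟩ := (S j).lower kstar hks hμ (m - 1) k
  have hj3 := (S j).upper kstar hks (m - 1) k
  have hp : 0 < ((2 : ℝ) ^ (m - 1))⁻¹ := by positivity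
  have hDi : 0 < (S i).D (m - 1) k := lt_of_lt_of_le hp hi1
  have hDj : 0 < (S j).D (m - 1) k := lt_of_lt_of_le hp hj1
  have h4 : (S j).D (m - 1) k ≤ 4 * (S i).D (m - 1) k := by linarith
  have hnum : lam * (((S i).D (m - 1) k) ^ 2)⁻¹ ≤
      min (16 * lam * (((S j).D (m - 1) k) ^ 2)⁻¹) (lam * 4 ^ (m - 1)) := by
    apply le_min
    · have hsq : ((S j).D (m - 1) k) ^ 2 ≤ 16 * ((S i).D (m - 1) k) ^ 2 := by nlinarith
      have hle : (((S i).D (m - 1) k) ^ 2)⁻¹ ≤ 16 * (((S j).D (m - 1) k) ^ 2)⁻¹ := by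
        rw [← div_eq_mul_inv, inv_eq_one_div, div_le_div_iff₀ (by positivity) (by positivity)]
        linarith
      calc _ ≤ lam * (16 * (((S j).D (m - 1) k) ^ 2)⁻¹) :=
            mul_le_mul_of_nonneg_left hle hlam.le
        _ = _ := by ring
    · apply mul_le_mul_of_nonneg_left _ hlam.le
      have hpow : ((4 : ℝ) ^ (m - 1))⁻¹ = (((2 : ℝ) ^ (m - 1))⁻¹) ^ 2 := by
        rw [inv_pow, ← pow_mul, mul_comm, pow_mul]; norm_num
      apply inv_le_of_inv_le₀ (by positivity)
      rw [hpow]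
      gcongr
  have hn0 : 0 ≤ lam * (((S i).D (m - 1) k) ^ 2)⁻¹ := by positivity
  exact div_le_div₀ (hn0.trans hnum) hnum (by positivity)
    (mul_le_mul_of_nonneg_left hvle' hα'.le)
end

section
/- Let ι be a finite set, x : ι → ℝ, C ⊆ ι, and let L, U ⊆ ι be disjoint subsets with |L| = |U| = f and |C| ≤ f. Assume x(l) ≤ x(j) for every l ∈ L and every j ∈ ι \ L, and x(j) ≤ x(u) for every u ∈ U and every j ∈ ι \ U. Let B = ι \ (L ∪ U). Then there exists a weight function w : ι → ℝ with 0 ≤ w_j ≤ 1 for all j ∈ ι, w_j = 0 for every j ∈ C, Σ_{j∈ι} w_j = |B|, and Σ_{j∈B} x(j) = Σ_{j∈ι} w_j · x(j). -/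
theorem sum_le_sum_of_card_eq_aux {ι : Type*} (x : ι → ℝ) (S T : Finset ι)
    (hc : S.card = T.card) (h : ∀ s ∈ S, ∀ t ∈ T, x s ≤ x t) :
    ∑ j ∈ S, x j ≤ ∑ j ∈ T, x j := by
  have e := Finset.equivOfCardEq hc
  rw [← Finset.sum_coe_sort S, ← Finset.sum_coe_sort T, ← Equiv.sum_comp e]
  exact Finset.sum_le_sum fun i _ => h _ i.2 _ (e i).2

/-- Core guarantee of the trimmed-mean filter: the sum of retained values equals
a sub-convex combination (weights in `[0,1]`, total weight `|B|`) of the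
uncorrupted agents' values only. -/
theorem stmt_8 {ι : Type*} [Fintype ι] [DecidableEq ι] (x : ι → ℝ)
    (C L U : Finset ι) (f : ℕ) (hLU : Disjoint L U)
    (hL : L.card = f) (hU : U.card = f) (hC : C.card ≤ f)
    (hLlow : ∀ l ∈ L, ∀ j, j ∉ L → x l ≤ x j)
    (hUhigh : ∀ u ∈ U, ∀ j, j ∉ U → x j ≤ x u) :
    ∃ w : ι → ℝ, (∀ j, 0 ≤ w j ∧ w j ≤ 1) ∧ (∀ j ∈ C, w j = 0) ∧
      (∑ j, w j) = (((L ∪ U)ᶜ : Finset ι).card : ℝ) ∧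
      ∑ j ∈ ((L ∪ U)ᶜ : Finset ι), x j = ∑ j, w j * x j := by
  set B : Finset ι := (L ∪ U)ᶜ with hB
  have hBL : Disjoint B L := by
    rw [Finset.disjoint_left]; intro a; simp [hB]; tauto
  have hBU : Disjoint B U := by
    rw [Finset.disjoint_left]; intro a; simp [hB]
  have key : ∀ S : Finset ι, S.card = f → Disjoint B S → (B ∩ C).card ≤ (S \ C).card := by
    intro S hS hd
    have h1 := Finset.card_sdiff_add_card_inter S C
    have h2 : (B ∩ C ∪ S ∩ C).card = (B ∩ C).card + (S ∩ C).card :=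
      Finset.card_union_of_disjoint
        (hd.mono Finset.inter_subset_left Finset.inter_subset_left)
    have h3 : (B ∩ C ∪ S ∩ C).card ≤ C.card :=
      Finset.card_le_card (Finset.union_subset Finset.inter_subset_right Finset.inter_subset_right)
    omega
  obtain ⟨Lsub, hLs, hLc⟩ := Finset.exists_subset_card_eq (key L hL hBL)
  obtain ⟨Usub, hUs, hUc⟩ := Finset.exists_subset_card_eq (key U hU hBU)
  have hLm : ∀ j ∈ Lsub, j ∈ L ∧ j ∉ C := fun j hj => Finset.mem_sdiff.1 (hLs hj)
  have hUm : ∀ j ∈ Usub, j ∈ U ∧ j ∉ C := fun j hj => Finset.mem_sdiff.1 (hUs hj)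
  have hle1 : ∑ j ∈ Lsub, x j ≤ ∑ j ∈ B ∩ C, x j :=
    sum_le_sum_of_card_eq_aux x _ _ hLc fun s hs t ht =>
      hLlow s (hLm s hs).1 t (Finset.disjoint_left.1 hBL (Finset.mem_inter.1 ht).1)
  have hle2 : ∑ j ∈ B ∩ C, x j ≤ ∑ j ∈ Usub, x j :=
    sum_le_sum_of_card_eq_aux x _ _ hUc.symm fun s hs t ht =>
      hUhigh t (hUm t ht).1 s (Finset.disjoint_left.1 hBU (Finset.mem_inter.1 hs).1)
  obtain ⟨a, b, ha, hb, hab, hs⟩ := Icc_subset_segment (𝕜 := ℝ) ⟨hle1, hle2⟩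
  simp only [smul_eq_mul] at hs
  refine ⟨fun j => (if j ∈ B \ C then 1 else 0) + (if j ∈ Lsub then a else 0)
    + (if j ∈ Usub then b else 0), ?_, ?_, ?_, ?_⟩
  · intro j
    have d1 : j ∈ B → j ∉ L := fun h => Finset.disjoint_left.1 hBL h
    have d2 : j ∈ B → j ∉ U := fun h => Finset.disjoint_left.1 hBU h
    have d3 : j ∈ L → j ∉ U := fun h => Finset.disjoint_left.1 hLU h
    have d4 := hLm j
    have d5 := hUm j
    have d6 : j ∈ B \ C → j ∈ B := fun h => (Finset.mem_sdiff.1 h).1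
    constructor
    · positivity
    · beta_reduce
      clear key hLlow hUhigh hLm hUm hle1 hle2 hs hLs hUs hBL hBU hLU
      clear_value B
      split_ifs <;> first | linarith | grind
  · intro j hj
    have d4 := hLm j
    have d5 := hUm j
    have h1 : j ∉ B \ C := fun h => (Finset.mem_sdiff.1 h).2 hj
    have h2 : j ∉ Lsub := by tauto
    have h3 : j ∉ Usub := by tauto
    simp only [h1, h2, h3, if_false, add_zero]
  · have h1 := Finset.card_sdiff_add_card_inter B C
    simp only [Finset.sum_add_distrib, Finset.sum_ite_mem, Finset.univ_inter, Finset.sum_const,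
      nsmul_eq_mul, hLc, hUc]
    rw [← h1]
    push_cast
    linear_combination ((B ∩ C).card : ℝ) * hab
  · have h1 := Finset.sum_inter_add_sum_sdiff B C x
    simp only [add_mul, ite_mul, zero_mul, one_mul, Finset.sum_add_distrib, Finset.sum_ite_mem,
      Finset.univ_inter, ← Finset.mul_sum]
    linarith
end

section
/- Let a ≥ 1 and b > 0 be reals, define N_m = ⌈a·4^{m−1}⌉ for every integer m ≥ 1, let C_1, C_2, … be nonnegative reals, and define ρ_0 = 0 and ρ_m = Σ_{s=1}^m C_s / (8^{m−s} · b · N_s) for m ≥ 1. Then for every integer M ≥ 1: Σ_{m=1}^M ρ_{m−1} · N_m ≤ (88/7) · (Σ_{s=1}^M C_s) / b. -/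
/-- Discounted-corruption sum bound: with epoch lengths `N m = ⌈a·4^{m−1}⌉` and
discounted offset rates `ρ m = Σ_{s=1}^m C s / (8^{m−s} b N s)`,
`Σ_{m=1}^M ρ_{m−1} N_m ≤ (88/7) (Σ_{s=1}^M C_s) / b`. -/
theorem stmt_10 (a b : ℝ) (ha : 1 ≤ a) (hb : 0 < b)
    (N : ℕ → ℕ) (hN : ∀ m, 1 ≤ m → N m = ⌈a * 4 ^ (m - 1)⌉₊)
    (C : ℕ → ℝ) (hC : ∀ s, 0 ≤ C s)
    (ρ : ℕ → ℝ) (hρ0 : ρ 0 = 0)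
    (hρ : ∀ m, 1 ≤ m →
      ρ m = ∑ s ∈ Finset.Icc 1 m, C s / (8 ^ (m - s) * b * (N s : ℝ)))
    (M : ℕ) (hM : 1 ≤ M) :
    ∑ m ∈ Finset.Icc 1 M, ρ (m - 1) * (N m : ℝ) ≤
      (88 / 7) * (∑ s ∈ Finset.Icc 1 M, C s) / b := by
  have hNpos : ∀ m, 1 ≤ m → (0 : ℝ) < N m := by
    intro m hm
    rw [hN m hm]
    have : 0 < a * 4 ^ (m - 1) := by positivity
    exact_mod_cast Nat.ceil_pos.mpr this
  have hN4 : ∀ m, 1 ≤ m → (N (m + 1) : ℝ) ≤ 4 * N m := by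
    intro m hm
    obtain ⟨k, rfl⟩ : ∃ k, m = k + 1 := ⟨m - 1, by omega⟩
    have h : N (k + 1 + 1) ≤ 4 * N (k + 1) := by
      rw [hN (k + 1 + 1) (by omega), hN (k + 1) hm]
      apply Nat.ceil_le.mpr
      have := Nat.le_ceil (a * 4 ^ k)
      simp only [Nat.add_sub_cancel]
      push_cast
      rw [pow_succ]
      linarith
    exact_mod_cast h
  have hrec : ∀ m, ρ (m + 1) = ρ m / 8 + C (m + 1) / (b * N (m + 1)) := by
    intro m
    rcases Nat.eq_zero_or_pos m with rfl | hm
    · rw [hρ _ le_rfl, hρ0]; simp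
    · rw [hρ _ (by omega), Finset.sum_Icc_succ_top (by omega), hρ m hm, Finset.sum_div]
      congr 1
      · apply Finset.sum_congr rfl
        intro s hs
        rw [Finset.mem_Icc] at hs
        rw [Nat.succ_sub hs.2, pow_succ, div_div]
        congr 1
        ring
      · simp
  have hρnn : ∀ m, 0 ≤ ρ m := by
    intro m
    induction m with
    | zero => rw [hρ0]
    | succ m ih =>
      rw [hrec]
      have := hC (m + 1)
      positivity
  have hstep : ∀ m, ρ m * N (m + 1) ≤ 4 * (ρ m * N m) := by
    intro m
    rcases Nat.eq_zero_or_pos m with rfl | hm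
    · rw [hρ0]; simp
    · have := mul_le_mul_of_nonneg_left (hN4 m hm) (hρnn m)
      linarith
  have key : ∀ n, ∑ m ∈ Finset.Icc 1 n, ρ (m - 1) * (N m : ℝ) + 8 * (ρ n * N n) ≤
      8 * ((∑ s ∈ Finset.Icc 1 n, C s) / b) := by
    intro n
    induction n with
    | zero => simp [hρ0]
    | succ n ih =>
      rw [Finset.sum_Icc_succ_top (by omega), Finset.sum_Icc_succ_top (by omega), add_div]
      have h1 : ρ (n + 1) * N (n + 1) = ρ n * N (n + 1) / 8 + C (n + 1) / b := by
        have := (hNpos (n + 1) (by omega)).ne'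
        rw [hrec]
        field_simp
      have := hstep n
      simp only [Nat.add_sub_cancel]
      linarith
  have h := key M
  have h2 : 0 ≤ ρ M * N M := mul_nonneg (hρnn M) (Nat.cast_nonneg _)
  have h3 : 0 ≤ (∑ s ∈ Finset.Icc 1 M, C s) / b :=
    div_nonneg (Finset.sum_nonneg fun s _ => hC s) hb.le
  rw [mul_div_assoc]
  linarith
end

section
/- Let a ≥ 1 and b > 0 be reals, define N_m = ⌈a·4^{m−1}⌉ for m ≥ 1, let C_1, C_2, … be nonnegative reals, define ρ_0 = 0 and ρ_m = Σ_{s=1}^m C_s / (8^{m−s}·b·N_s). Suppose for every m ∈ {1,…,M} there are a finite set Z_m of arms, nonnegative reals ñ^m_k for k ∈ Z_m with Σ_{k∈Z_m} ñ^m_k ≤ N_m, and nonnegative reals Δ_k with Δ_k ≤ 72·ρ_{m−1} for every k ∈ Z_m. Then Σ_{m=1}^M Σ_{k∈Z_m} Δ_k · ñ^m_k ≤ 906 · (Σ_{s=1}^M C_s) / b. -/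
/-- Case-1 regret bound under adversarial corruption with `β > α`: arms whose
gap is dominated by the discounted offset rate (`Δ_k ≤ 72 ρ_{m−1}`) contribute
total regret at most `906 (Σ C_s) / b`. -/
theorem stmt_11 {K : Type*} (a b : ℝ) (ha : 1 ≤ a) (hb : 0 < b)
    (N : ℕ → ℕ) (hN : ∀ m, 1 ≤ m → N m = ⌈a * 4 ^ (m - 1)⌉₊)
    (C : ℕ → ℝ) (hC : ∀ s, 0 ≤ C s)
    (ρ : ℕ → ℝ) (hρ0 : ρ 0 = 0)
    (hρ : ∀ m, 1 ≤ m →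
      ρ m = ∑ s ∈ Finset.Icc 1 m, C s / (8 ^ (m - s) * b * (N s : ℝ)))
    (M : ℕ) (Z : ℕ → Finset K) (nt : ℕ → K → ℝ) (Δ : K → ℝ)
    (hnt : ∀ m ∈ Finset.Icc 1 M, ∀ k ∈ Z m, 0 ≤ nt m k)
    (hΔ0 : ∀ k, 0 ≤ Δ k)
    (hsum : ∀ m ∈ Finset.Icc 1 M, ∑ k ∈ Z m, nt m k ≤ (N m : ℝ))
    (hΔ : ∀ m ∈ Finset.Icc 1 M, ∀ k ∈ Z m, Δ k ≤ 72 * ρ (m - 1)) :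
    ∑ m ∈ Finset.Icc 1 M, ∑ k ∈ Z m, Δ k * nt m k ≤
      906 * (∑ s ∈ Finset.Icc 1 M, C s) / b := by
  have hNpos : ∀ m, 1 ≤ m → (0 : ℝ) < N m := by
    intro m hm
    rw [hN m hm]
    have : 0 < ⌈a * 4 ^ (m - 1)⌉₊ := Nat.ceil_pos.mpr (by positivity)
    exact_mod_cast this
  have hNs : ∀ m, 1 ≤ m → (N (m + 1) : ℝ) ≤ 4 * N m := by
    intro m hm
    have h : N (m + 1) ≤ 4 * N m := by
      rw [hN (m + 1) (by omega), hN m hm]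
      apply Nat.ceil_le.mpr
      have h1 := Nat.le_ceil (a * 4 ^ (m - 1))
      have h2 : m + 1 - 1 = (m - 1) + 1 := by omega
      rw [h2, pow_succ]
      push_cast
      linarith
    exact_mod_cast h
  have hrec : ∀ m, ρ (m + 1) = ρ m / 8 + C (m + 1) / (b * N (m + 1)) := by
    intro m
    have hm0 : ρ m = ∑ s ∈ Finset.Icc 1 m, C s / (8 ^ (m - s) * b * (N s : ℝ)) := by
      rcases Nat.eq_zero_or_pos m with h | h
      · subst h; simp [hρ0]
      · exact hρ m h
    rw [hρ (m + 1) (by omega), Finset.sum_Icc_succ_top (by omega), hm0, Finset.sum_div]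
    congr 1
    · apply Finset.sum_congr rfl
      intro s hs
      have hs' := Finset.mem_Icc.mp hs
      have h2 : m + 1 - s = (m - s) + 1 := by omega
      rw [h2, pow_succ, div_div]
      congr 1
      ring
    · simp
  have hρnn : ∀ m, 0 ≤ ρ m := by
    intro m
    induction m with
    | zero => simp [hρ0]
    | succ m ih =>
      rw [hrec]
      have := hC (m + 1)
      positivity
  have key : ∀ M, ∑ m ∈ Finset.Icc 1 M, (N m : ℝ) * ρ (m - 1) + 2 * (N (M + 1) * ρ M) ≤
      8 * ((∑ s ∈ Finset.Icc 1 M, C s) / b) := by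
    intro M
    induction M with
    | zero => simp [hρ0]
    | succ M ih =>
      rw [Finset.sum_Icc_succ_top (by omega), Finset.sum_Icc_succ_top (by omega), add_div]
      have h1 : (N (M + 1 + 1) : ℝ) * ρ (M + 1) ≤ 4 * N (M + 1) * ρ (M + 1) :=
        mul_le_mul_of_nonneg_right (hNs _ (by omega)) (hρnn _)
      have h2 : 4 * (N (M + 1) : ℝ) * ρ (M + 1) = N (M + 1) * ρ M / 2 + 4 * (C (M + 1) / b) := by
        rw [hrec]
        have := (hNpos (M + 1) (by omega)).ne'
        field_simp
        ring
      simp only [Nat.add_sub_cancel]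
      linarith
  have hstep : ∑ m ∈ Finset.Icc 1 M, ∑ k ∈ Z m, Δ k * nt m k ≤
      ∑ m ∈ Finset.Icc 1 M, 72 * ((N m : ℝ) * ρ (m - 1)) := by
    apply Finset.sum_le_sum
    intro m hm
    calc ∑ k ∈ Z m, Δ k * nt m k ≤ ∑ k ∈ Z m, 72 * ρ (m - 1) * nt m k :=
          Finset.sum_le_sum fun k hk =>
            mul_le_mul_of_nonneg_right (hΔ m hm k hk) (hnt m hm k hk)
      _ = 72 * ρ (m - 1) * ∑ k ∈ Z m, nt m k := by rw [Finset.mul_sum]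
      _ ≤ 72 * ρ (m - 1) * N m :=
          mul_le_mul_of_nonneg_left (hsum m hm) (mul_nonneg (by norm_num) (hρnn _))
      _ = 72 * ((N m : ℝ) * ρ (m - 1)) := by ring
  rw [← Finset.mul_sum] at hstep
  have hk := key M
  have hT : 0 ≤ (N (M + 1) : ℝ) * ρ M := mul_nonneg (Nat.cast_nonneg _) (hρnn _)
  have hS : 0 ≤ (∑ s ∈ Finset.Icc 1 M, C s) / b :=
    div_nonneg (Finset.sum_nonneg fun s _ => hC s) hb.le
  rw [mul_div_assoc]
  linarith
end

section
/- Fix a finite nonempty set of arms K with mean rewards μ_k ∈ [0,1], an optimal arm k* with μ_{k*} = max_k μ_k, and gaps Δ_k = μ_{k*} − μ_k. Let c_1, c_2, … be nonnegative reals and set ρ_0 = 0 and ρ_m = Σ_{s=1}^m c_s · 8^{s−m}. Suppose Δ^0_k = 1 for all k, and for every m ≥ 1 there are reals r^m_k with |r^m_k − μ_k| ≤ Δ^{m−1}_k/8 + 2c_m for all k, r^m_* = max_k (r^m_k − Δ^{m−1}_k/8), and Δ^m_k = max(2^{−m}, r^m_* − r^m_k). Then for every m ≥ 0 and every arm k: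 (6/7)·Δ_k − (3/4)·2^{−m} − 12·ρ_m ≤ Δ^m_k ≤ (8/7)·Δ_k + 2^{−m} + 4·ρ_m. -/
/-- Corrupted gap-estimate induction: with normalized per-epoch corruption
rates `c m` and discounted offset rates `ρ m = Σ_{s=1}^m c_s 8^{s−m}`, the gap
estimates satisfy
`(6/7)Δ_k − (3/4)2^{−m} − 12ρ_m ≤ Δ^m_k ≤ (8/7)Δ_k + 2^{−m} + 4ρ_m`. -/
theorem stmt_12 {K : Type*} [Fintype K] [Nonempty K]
    (μ : K → ℝ) (hμ : ∀ k, μ k ∈ Set.Icc (0 : ℝ) 1)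
    (kstar : K) (hks : ∀ k, μ k ≤ μ kstar)
    (c : ℕ → ℝ) (hc : ∀ m, 0 ≤ c m)
    (ρ : ℕ → ℝ) (hρ0 : ρ 0 = 0)
    (hρ : ∀ m, 1 ≤ m →
      ρ m = ∑ s ∈ Finset.Icc 1 m, c s * (8 : ℝ) ^ ((s : ℤ) - (m : ℤ)))
    (D : ℕ → K → ℝ) (r : ℕ → K → ℝ)
    (hD0 : ∀ k, D 0 k = 1)
    (hr : ∀ (m : ℕ) (k : K), |r (m + 1) k - μ k| ≤ D m k / 8 + 2 * c (m + 1))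
    (hD : ∀ (m : ℕ) (k : K),
      D (m + 1) k = max ((2 : ℝ) ^ (-((m : ℤ) + 1)))
        ((Finset.univ.sup' Finset.univ_nonempty (fun k' => r (m + 1) k' - D m k' / 8))
          - r (m + 1) k))
    (m : ℕ) (k : K) :
    (6 / 7) * (μ kstar - μ k) - (3 / 4) * (2 : ℝ) ^ (-(m : ℤ)) - 12 * ρ m ≤ D m k ∧
    D m k ≤ (8 / 7) * (μ kstar - μ k) + (2 : ℝ) ^ (-(m : ℤ)) + 4 * ρ m := by
  have hrec : ∀ n, ρ (n + 1) = ρ n / 8 + c (n + 1) := by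
    intro n
    have hn : ρ n = ∑ s ∈ Finset.Icc 1 n, c s * (8 : ℝ) ^ ((s : ℤ) - (n : ℤ)) := by
      rcases Nat.eq_zero_or_pos n with h | h
      · subst h; simp [hρ0]
      · exact hρ n h
    rw [hρ (n + 1) (by omega), Finset.sum_Icc_succ_top (by omega), hn, Finset.sum_div]
    congr 1
    · apply Finset.sum_congr rfl
      intro s _
      have : (s : ℤ) - ((n + 1 : ℕ) : ℤ) = ((s : ℤ) - n) - 1 := by push_cast; ring
      rw [this, zpow_sub_one₀ (by norm_num)]
      ring
    · simp
  have hpos : ∀ n, 0 ≤ ρ n := by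
    intro n
    induction n with
    | zero => rw [hρ0]
    | succ n ih => rw [hrec]; linarith [hc (n + 1)]
  have hp : ∀ n : ℕ, (2 : ℝ) ^ (-((n : ℤ) + 1)) = (2 : ℝ) ^ (-(n : ℤ)) / 2 := by
    intro n
    have : -((n : ℤ) + 1) = -(n : ℤ) - 1 := by ring
    rw [this, zpow_sub_one₀ (by norm_num)]
    ring
  have hup : ∀ (n : ℕ) (k : K),
      D n k ≤ (8 / 7) * (μ kstar - μ k) + (2 : ℝ) ^ (-(n : ℤ)) + 4 * ρ n := by
    intro n
    induction n with
    | zero =>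
      intro k
      rw [hD0, hρ0]
      have := hks k
      simp
      linarith
    | succ n ih =>
      intro k
      have h2 : (0 : ℝ) < (2 : ℝ) ^ (-(n : ℤ)) := by positivity
      have h1 := hks k
      have h3 := hpos n
      have h4 := hc (n + 1)
      rw [hD, hrec]
      push_cast
      rw [hp]
      apply max_le
      · linarith
      · have hs : Finset.univ.sup' Finset.univ_nonempty
            (fun k' => r (n + 1) k' - D n k' / 8) ≤ μ kstar + 2 * c (n + 1) := by
          apply Finset.sup'_le
          intro j _
          have := (abs_le.mp (hr n j)).2
          have := hks j
          linarith
        have := (abs_le.mp (hr n k)).1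
        have := ih k
        linarith
  refine ⟨?_, hup m k⟩
  cases m with
  | zero =>
    rw [hD0, hρ0]
    have := (hμ k).1
    have := (hμ kstar).2
    simp
    linarith
  | succ n =>
    have h4 := hc (n + 1)
    rw [hD, hrec]
    push_cast
    rw [hp]
    refine le_trans ?_ (le_max_right _ _)
    have hs := Finset.le_sup' (fun k' => r (n + 1) k' - D n k' / 8) (Finset.mem_univ kstar)
    have := (abs_le.mp (hr n k)).2
    have := (abs_le.mp (hr n kstar)).1
    have := hup n k
    have := hup n kstar
    linarith
end

section
/- Let m ≥ 1 be an integer and Δ ≥ 0 a real. If (6/7)·Δ − (3/4)·2^{−(m−1)} ≤ 2^{−(m−1)}, then Δ ≤ (49/12)·2^{−m}. Consequently, for every gap-estimate sequence (Δ^m_k, r^m_k) for mean rewards μ_k ∈ [0,1] with gaps Δ_k, any arm k with Δ^{m−1}_k = 2^{−(m−1)} satisfies Δ_k ≤ (49/12)·2^{−m}. -/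
theorem gap_upper {K : Type*} [Fintype K] [Nonempty K] (μ : K → ℝ) (kstar : K)
    (hs : ∀ k, μ k ≤ μ kstar) (S : GapEstSeq μ) (n : ℕ) :
    ∀ k, S.D n k ≤ 8 / 7 * (μ kstar - μ k) + (2 : ℝ) ^ (-(n : ℤ)) := by
  induction n with
  | zero =>
    intro k
    have := hs k
    rw [S.hD0]
    norm_num
    linarith
  | succ n ih =>
    intro k
    have h1 := hs k
    have h2 := ih k
    have he : (2 : ℝ) ^ (-(n : ℤ)) = 2 * (2 : ℝ) ^ (-((n : ℤ) + 1)) := by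
      rw [← zpow_one_add₀ (by norm_num)]
      congr 1
      ring
    have hp : (0 : ℝ) < (2 : ℝ) ^ (-((n : ℤ) + 1)) := by positivity
    have hsup : Finset.univ.sup' Finset.univ_nonempty
        (fun k' => S.r (n + 1) k' - S.D n k' / 8) ≤ μ kstar := by
      apply Finset.sup'_le
      intro k' _
      have := (abs_le.mp (S.hr n k')).2
      have := hs k'
      linarith
    have h3 := (abs_le.mp (S.hr n k)).1
    rw [S.hD]
    push_cast
    apply max_le <;> linarith

/-- If `(6/7)Δ − (3/4)2^{−(m−1)} ≤ 2^{−(m−1)}` then `Δ ≤ (49/12)2^{−m}`;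
consequently the fallback arm (with `Δ^{m−1}_k = 2^{−(m−1)}`) of a gap-estimate
sequence has true gap at most `(49/12)2^{−m}`. -/
theorem stmt_14 :
    (∀ (m : ℕ), 1 ≤ m → ∀ Δ : ℝ, 0 ≤ Δ →
      (6 / 7) * Δ - (3 / 4) * (2 : ℝ) ^ (-((m : ℤ) - 1)) ≤ (2 : ℝ) ^ (-((m : ℤ) - 1)) →
      Δ ≤ (49 / 12) * (2 : ℝ) ^ (-(m : ℤ))) ∧
    (∀ (K : Type) [Fintype K] [Nonempty K] (μ : K → ℝ),
      (∀ k, μ k ∈ Set.Icc (0 : ℝ) 1) → ∀ kstar : K, (∀ k, μ k ≤ μ kstar) →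
      ∀ (S : GapEstSeq μ) (m : ℕ), 1 ≤ m → ∀ k : K,
        S.D (m - 1) k = (2 : ℝ) ^ (-((m : ℤ) - 1)) →
        μ kstar - μ k ≤ (49 / 12) * (2 : ℝ) ^ (-(m : ℤ))) := by
  have first : ∀ (m : ℕ), 1 ≤ m → ∀ Δ : ℝ, 0 ≤ Δ →
      (6 / 7) * Δ - (3 / 4) * (2 : ℝ) ^ (-((m : ℤ) - 1)) ≤ (2 : ℝ) ^ (-((m : ℤ) - 1)) →
      Δ ≤ (49 / 12) * (2 : ℝ) ^ (-(m : ℤ)) := by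
    intro m _ Δ _ h
    have he : (2 : ℝ) ^ (-((m : ℤ) - 1)) = 2 * (2 : ℝ) ^ (-(m : ℤ)) := by
      rw [← zpow_one_add₀ (by norm_num)]
      congr 1
      ring
    rw [he] at h
    linarith
  refine ⟨first, ?_⟩
  intro K _ _ μ hμ kstar hs S m hm k hk
  apply first m hm _ (by linarith [hs k])
  obtain ⟨n, rfl⟩ : ∃ n, m = n + 1 := ⟨m - 1, by omega⟩
  have hc : (-(((n + 1 : ℕ) : ℤ) - 1)) = -(n : ℤ) := by push_cast; ring
  rw [hc] at hk ⊢
  rw [Nat.add_sub_cancel] at hk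
  cases n with
  | zero =>
    have h1 := (hμ kstar).2
    have h2 := (hμ k).1
    norm_num
    linarith
  | succ n =>
    have he : (2 : ℝ) ^ (-(n : ℤ)) = 2 * (2 : ℝ) ^ (-((n : ℤ) + 1)) := by
      rw [← zpow_one_add₀ (by norm_num)]
      congr 1
      ring
    have hk1 := gap_upper μ kstar hs S n k
    have hk2 := gap_upper μ kstar hs S n kstar
    have h3 := (abs_le.mp (S.hr n k)).2
    have h4 := (abs_le.mp (S.hr n kstar)).1
    have h5 := Finset.le_sup' (fun k' => S.r (n + 1) k' - S.D n k' / 8)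
      (Finset.mem_univ kstar)
    have h6 := le_max_right ((2 : ℝ) ^ (-((n : ℤ) + 1)))
      ((Finset.univ.sup' Finset.univ_nonempty
        (fun k' => S.r (n + 1) k' - S.D n k' / 8)) - S.r (n + 1) k)
    rw [← S.hD, hk] at h6
    push_cast at h6 ⊢
    linarith
end
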